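/- Let A be a d×n real matrix with d ≤ 5 or n ≤ 5. Then the tropical rank of A (the largest r such that A has a tropically nonsingular r×r submatrix) equals the Kapranov rank of A (the minimum of rank(Ã) over all lifts Ã of A over K). -/

import Mathlib

noncomputable section

/-- The field of generalized power series over `ℂ` with real exponents and
well-ordered support. -/
abbrev K : Type := HahnSeries ℝ ℂ

/-- An `m × m` real matrix is tropically singular if the minimum over all permutations `σ`
of `∑ i, M i (σ i)` is attained by at least two distinct permutations. -/
def TropSingular {m : ℕ} (M : Matrix (Fin m) (Fin m) ℝ) : Prop :=
  ∃ σ τ : Equiv.Perm (Fin m), σ ≠ τ ∧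
    (∑ i, M i (σ i)) = (∑ i, M i (τ i)) ∧
    ∀ ρ : Equiv.Perm (Fin m), (∑ i, M i (σ i)) ≤ ∑ i, M i (ρ i)

/-- `B` is a lift of the real matrix `A` over `K`: every entry of `B` is nonzero and its
valuation (order, the smallest exponent of the support) equals the corresponding entry of `A`. -/
def IsLift {d n : ℕ} (A : Matrix (Fin d) (Fin n) ℝ) (B : Matrix (Fin d) (Fin n) K) : Prop :=
  ∀ i j, B i j ≠ 0 ∧ (B i j).order = A i j

/-- The tropical rank of `A`: the largest `r` such that `A` has a tropically nonsingular
`r × r` submatrix. -/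
noncomputable def tropicalRank {d n : ℕ} (A : Matrix (Fin d) (Fin n) ℝ) : ℕ :=
  sSup {r : ℕ | ∃ (ri : Fin r → Fin d) (ci : Fin r → Fin n),
    Function.Injective ri ∧ Function.Injective ci ∧ ¬ TropSingular (A.submatrix ri ci)}

/-- The Kapranov rank of `A`: the minimum of `rank B` over all lifts `B` of `A` over `K`. -/
noncomputable def kapranovRank {d n : ℕ} (A : Matrix (Fin d) (Fin n) ℝ) : ℕ :=
  sInf {k : ℕ | ∃ B : Matrix (Fin d) (Fin n) K, IsLift A B ∧ B.rank = k}

/-!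
A tropically nonsingular minor has a single term of least valuation in the expansion of the
corresponding minor of any lift, so that minor does not vanish: no lift has rank below the tropical
rank.

Conversely, suppose that all `(r + 1)`-minors are singular and, after transposing and repeating
rows, that there are five rows. Any `r + 1` rows are then tropically dependent. For a single
singular minor, weights are read off the cycles of a permutation that does not increase the weight
of the diagonal. As only finitely many minors arise by choosing a test column for each of the
`r + 1` rows, weights for these choices can be combined into weights that work for all columns.

The dependencies give lifts directly if `r ≤ 1` or `4 ≤ r`. For `r = 3` we take the common kernel of
two generic rows whose valuations are dependencies avoiding the rows `i` and `j`, and for `r = 2`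
the span of two generic rows whose valuations come from dependencies through the rows `i` and `j`.
Either lift exists unless in some column two of the dependencies attain their minimum exactly at
the same two rows. On five rows, comparing the differences of weights at all such common ties shows
that they cannot block every choice of `i` and `j`.
-/

section Duality

lemma exists_birkhoffSum_potential {α : Type*} (f : α → α) (g : α → ℝ) {N : ℕ} (hN : 0 < N) :
    ∃ l : α → ℝ, ∀ i, birkhoffSum f g N i ≤ 0 → g i + l (f i) ≤ l i := by
  have hne : (Finset.range N).Nonempty := Finset.nonempty_range_iff.2 hN.ne'
  have le_sup (i : α) {t : ℕ} (ht : t < N) : birkhoffSum f g t i ≤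
      (Finset.range N).sup' hne fun t ↦ birkhoffSum f g t i :=
    Finset.le_sup' (fun t ↦ birkhoffSum f g t i) (Finset.mem_range.2 ht)
  refine ⟨fun i ↦ (Finset.range N).sup' hne fun t ↦ birkhoffSum f g t i, fun i hi ↦ ?_⟩
  obtain ⟨t, ht, hmax⟩ := Finset.exists_mem_eq_sup' hne fun t ↦ birkhoffSum f g t (f i)
  beta_reduce
  rw [hmax, ← birkhoffSum_succ']
  rcases (Nat.add_one_le_iff.2 (Finset.mem_range.1 ht)).lt_or_eq with hlt | heq
  · exact le_sup i hlt
  · rw [heq]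
    exact hi.trans (le_sup i hN)

lemma birkhoffSum_orderOf_apply {α : Type*} (π : Equiv.Perm α) (w : α → ℝ) (i : α) :
    birkhoffSum π w (orderOf π) (π i) = birkhoffSum π w (orderOf π) i := by
  rw [← sub_eq_zero, birkhoffSum_apply_sub_birkhoffSum, ← Equiv.Perm.coe_pow, pow_orderOf_eq_one,
    Equiv.Perm.one_apply, sub_self]

lemma sum_birkhoffSum {α : Type*} [Fintype α] (π : Equiv.Perm α) (w : α → ℝ) (N : ℕ) :
    ∑ i, birkhoffSum π w N i = N * ∑ i, w i := by
  simp only [birkhoffSum, ← Equiv.Perm.coe_pow]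
  rw [Finset.sum_comm]
  simp [Equiv.sum_comp]

lemma exists_birkhoffSum_nonpos {α : Type*} [Fintype α] {π : Equiv.Perm α} (hπ : π ≠ 1)
    {w : α → ℝ} (hw : ∑ i, w i ≤ 0) (hfix : ∀ i, π i = i → w i = 0) (N : ℕ) :
    ∃ i, π i ≠ i ∧ birkhoffSum π w N i ≤ 0 := by
  by_contra! hpos
  obtain ⟨m, hm⟩ : ∃ m, π m ≠ m := by
    by_contra! h
    exact hπ (Equiv.ext h)
  have hnonneg (i : α) : 0 ≤ birkhoffSum π w N i := by
    by_cases hi : π i = i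
    · simp [Function.IsFixedPt.birkhoffSum_eq hi, hfix i hi]
    · exact (hpos i hi).le
  have : 0 < ∑ i, birkhoffSum π w N i :=
    Finset.sum_pos' (fun i _ ↦ hnonneg i) ⟨m, Finset.mem_univ m, hpos m hm⟩
  rw [sum_birkhoffSum] at this
  exact this.not_ge (mul_nonpos_of_nonneg_of_nonpos N.cast_nonneg hw)

variable {m : ℕ} {M : Matrix (Fin m) (Fin m) ℝ}

lemma TropSingular.exists_perm_ne_one (h : TropSingular M) :
    ∃ π : Equiv.Perm (Fin m), π ≠ 1 ∧ ∑ i, (M (π i) i - M i i) ≤ 0 := by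
  have of_le {ρ : Equiv.Perm (Fin m)} (hρ : ρ ≠ 1) (hle : ∑ i, M i (ρ i) ≤ ∑ i, M i i) :
      ∃ π : Equiv.Perm (Fin m), π ≠ 1 ∧ ∑ i, (M (π i) i - M i i) ≤ 0 := by
    refine ⟨ρ⁻¹, inv_ne_one.2 hρ, ?_⟩
    have hsum : ∑ i, M (ρ⁻¹ i) i = ∑ i, M i (ρ i) := by
      rw [← Equiv.sum_comp ρ]
      simp
    rw [Finset.sum_sub_distrib, hsum]
    exact sub_nonpos.2 hle
  obtain ⟨σ, τ, hne, heq, hmin⟩ := h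
  have hσ : ∑ i, M i (σ i) ≤ ∑ i, M i i := hmin 1
  by_cases hs : σ = 1
  · exact of_le (fun hτ ↦ hne (hs.trans hτ.symm)) (heq ▸ hσ)
  · exact of_le hs hσ

lemma TropSingular.exists_weights (h : TropSingular M) :
    ∃ w : Fin m → ℝ, ∀ i, ∃ j, j ≠ i ∧ w j + M j i ≤ w i + M i i := by
  obtain ⟨π, hπ, hsum⟩ := h.exists_perm_ne_one
  set g : Fin m → ℝ := fun i ↦ M (π i) i - M i i
  set N := orderOf π
  obtain ⟨l, hl⟩ := exists_birkhoffSum_potential π g (orderOf_pos π)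
  obtain ⟨i₀, hi₀⟩ := exists_birkhoffSum_nonpos hπ hsum (fun i hi ↦ by simp [hi]) N
  classical
  set Good : Fin m → Prop := fun i ↦ π i ≠ i ∧ birkhoffSum π g N i ≤ 0
  refine ⟨fun i ↦ if Good i then l i else l i₀ + M i₀ i - M i i, fun i ↦ ?_⟩
  beta_reduce
  by_cases hi : Good i
  · have hπi : Good (π i) :=
      ⟨fun h ↦ hi.1 (π.injective h), (birkhoffSum_orderOf_apply π g i).trans_le hi.2⟩
    refine ⟨π i, hi.1, ?_⟩
    rw [if_pos hi, if_pos hπi]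
    linarith [hl i hi.2]
  · refine ⟨i₀, fun h ↦ hi (h ▸ hi₀), ?_⟩
    rw [if_neg hi, if_pos hi₀]
    linarith

/- Rows are freed from the policy `s` one at a time: if `l k` works when row `i` is tested at
column `k` only, then the pointwise minimum over `k` of the `l k`, each normalised to vanish at
row `i`, works for all columns at row `i`. -/
lemma exists_weights_of_forall_policy {α κ : Type*} [Finite α] [Finite κ] [Nonempty κ]
    (A : α → κ → ℝ)
    (h : ∀ s : α → κ, ∃ w : α → ℝ, ∀ i, ∃ j, j ≠ i ∧ w j + A j (s i) ≤ w i + A i (s i)) :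
    ∃ w : α → ℝ, ∀ i c, ∃ j, j ≠ i ∧ w j + A j c ≤ w i + A i c := by
  classical
  have := Fintype.ofFinite α
  have := Fintype.ofFinite κ
  suffices key : ∀ (T : Finset α) (s : α → κ), ∃ w : α → ℝ,
      ∀ i c, (i ∈ T ∨ c = s i) → ∃ j, j ≠ i ∧ w j + A j c ≤ w i + A i c by
    obtain ⟨w, hw⟩ := key Finset.univ fun _ ↦ Classical.arbitrary κ
    exact ⟨w, fun i c ↦ hw i c (Or.inl (Finset.mem_univ i))⟩
  intro T
  induction T using Finset.induction_on with
  | empty =>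
    intro s
    obtain ⟨w, hw⟩ := h s
    refine ⟨w, fun i c hc ↦ ?_⟩
    obtain rfl : c = s i := by simpa using hc
    exact hw i
  | insert i T hi ih =>
    intro s
    choose l hl using fun k ↦ ih (Function.update s i k)
    have le (j : α) (k : κ) :
        (Finset.univ.inf' Finset.univ_nonempty fun k ↦ l k j - l k i) ≤ l k j - l k i :=
      Finset.inf'_le (fun k ↦ l k j - l k i) (Finset.mem_univ k)
    refine ⟨fun j ↦ Finset.univ.inf' Finset.univ_nonempty fun k ↦ l k j - l k i, fun m c hc ↦ ?_⟩
    obtain ⟨k, -, hk⟩ :=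
      Finset.exists_mem_eq_inf' (Finset.univ_nonempty (α := κ)) fun k ↦ l k m - l k i
    beta_reduce
    rw [hk]
    by_cases hmi : m = i
    · subst hmi
      obtain ⟨j, hj, hle⟩ := hl c m c (Or.inr (by simp))
      exact ⟨j, hj, by linarith [le j c]⟩
    · obtain ⟨j, hj, hle⟩ := hl k m c (by simpa [hmi] using hc)
      exact ⟨j, hj, by linarith [le j k]⟩

end Duality

section Minors

variable {m : ℕ} {M : Matrix (Fin m) (Fin m) ℝ}

lemma exists_perm_sum_le (M : Matrix (Fin m) (Fin m) ℝ) :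
    ∃ σ : Equiv.Perm (Fin m), ∀ ρ : Equiv.Perm (Fin m), ∑ i, M i (σ i) ≤ ∑ i, M i (ρ i) :=
  Finite.exists_min fun ρ : Equiv.Perm (Fin m) ↦ ∑ i, M i (ρ i)

lemma TropSingular.transpose (h : TropSingular M) : TropSingular M.transpose := by
  have sum_transpose (ρ : Equiv.Perm (Fin m)) :
      ∑ i, M.transpose i (ρ i) = ∑ i, M i (ρ⁻¹ i) := by
    rw [← Equiv.sum_comp ρ⁻¹]
    simp
  obtain ⟨σ, τ, hne, heq, hmin⟩ := h
  refine ⟨σ⁻¹, τ⁻¹, inv_injective.ne hne, ?_, fun ρ ↦ ?_⟩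
  · simpa only [sum_transpose, inv_inv] using heq
  · simpa only [sum_transpose, inv_inv] using hmin ρ⁻¹

lemma tropSingular_of_column_eq {a b : Fin m} (hab : a ≠ b) (h : ∀ i, M i a = M i b) :
    TropSingular M := by
  obtain ⟨σ, hσ⟩ := exists_perm_sum_le M
  refine ⟨σ, Equiv.swap a b * σ, fun hswap ↦ ?_, Finset.sum_congr rfl fun i _ ↦ ?_, hσ⟩
  · exact hab (Equiv.swap_eq_one_iff.1 (mul_eq_right.1 hswap.symm))
  · rw [Equiv.Perm.mul_apply, Equiv.swap_apply_def]
    split_ifs with ha hb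
    · rw [ha, h]
    · rw [hb, h]
    · rfl

lemma tropSingular_of_row_eq {a b : Fin m} (hab : a ≠ b) (h : ∀ i, M a i = M b i) :
    TropSingular M :=
  (tropSingular_of_column_eq (M := M.transpose) hab h).transpose

lemma tropSingular_submatrix_of_forall_injective {ι κ : Type*} {A : Matrix ι κ ℝ}
    (h : ∀ (ri : Fin m → ι) (ci : Fin m → κ), ri.Injective → ci.Injective →
      TropSingular (A.submatrix ri ci)) (ri : Fin m → ι) (ci : Fin m → κ) :
    TropSingular (A.submatrix ri ci) := by
  by_cases hri : ri.Injective
  · by_cases hci : ci.Injective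
    · exact h ri ci hri hci
    · obtain ⟨a, b, heq, hne⟩ := Function.not_injective_iff.1 hci
      exact tropSingular_of_column_eq hne fun i ↦ by simp [heq]
  · obtain ⟨a, b, heq, hne⟩ := Function.not_injective_iff.1 hri
    exact tropSingular_of_row_eq hne fun i ↦ by simp [heq]

end Minors

section Dependencies

variable {ι κ : Type*}

/-- The minimum of `f` over the finite set `s` is attained at least twice; there is no condition
if `s` is empty. For infinite `s` the minimum need not exist. -/
def MinTwiceOn (s : Set ι) (f : ι → ℝ) : Prop :=
  ∀ i ∈ s, ∃ j ∈ s, j ≠ i ∧ f j ≤ f i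

/-- The minimum of `f` over `s` is attained at the two distinct points `k` and `l` and nowhere
else. -/
structure MinExactlyAt (s : Set ι) (f : ι → ℝ) (k l : ι) : Prop where
  left_mem : k ∈ s
  right_mem : l ∈ s
  ne : k ≠ l
  eq : f k = f l
  lt : ∀ m ∈ s, m ≠ k → m ≠ l → f k < f m

/-- The weights `w` form a tropical linear dependency among the rows `i ∈ s` of the matrix whose
columns are the points `x c`: the minimum over `i ∈ s` of `w i + x c i` is attained twice for
every column `c`. The values of `w` outside `s` are irrelevant. -/
def IsDependency (x : κ → ι → ℝ) (s : Set ι) (w : ι → ℝ) : Prop :=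
  ∀ c, MinTwiceOn s (w + x c)

/-- In a single column, two weighted row sets `s` and `t` attain their minimum exactly at the same
two rows `k` and `l`. These ties are the obstructions to lifting a pair of dependencies. -/
def CommonTie (x : κ → ι → ℝ) (s : Set ι) (p : ι → ℝ) (t : Set ι) (q : ι → ℝ) (k l : ι) : Prop :=
  ∃ c, MinExactlyAt s (p + x c) k l ∧ MinExactlyAt t (q + x c) k l

lemma MinExactlyAt.symm {s : Set ι} {f : ι → ℝ} {k l : ι} (h : MinExactlyAt s f k l) :
    MinExactlyAt s f l k :=
  ⟨h.right_mem, h.left_mem, h.ne.symm, h.eq.symm, fun m hm hml hmk ↦ h.eq ▸ h.lt m hm hmk hml⟩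

lemma CommonTie.symm {x : κ → ι → ℝ} {s t : Set ι} {p q : ι → ℝ} {k l : ι}
    (h : CommonTie x s p t q k l) : CommonTie x s p t q l k :=
  let ⟨c, hp, hq⟩ := h
  ⟨c, hp.symm, hq.symm⟩

lemma CommonTie.swap {x : κ → ι → ℝ} {s t : Set ι} {p q : ι → ℝ} {k l : ι}
    (h : CommonTie x s p t q k l) : CommonTie x t q s p k l :=
  let ⟨c, hp, hq⟩ := h
  ⟨c, hq, hp⟩

lemma MinTwiceOn.congr {s : Set ι} {f g : ι → ℝ} (h : MinTwiceOn s f) (hfg : s.EqOn f g) :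
    MinTwiceOn s g := fun i hi ↦
  let ⟨j, hj, hji, hle⟩ := h i hi
  ⟨j, hj, hji, by rwa [← hfg hi, ← hfg hj]⟩

lemma MinExactlyAt.congr {s : Set ι} {f g : ι → ℝ} {k l : ι} (h : MinExactlyAt s f k l)
    (hfg : s.EqOn f g) : MinExactlyAt s g k l where
  left_mem := h.left_mem
  right_mem := h.right_mem
  ne := h.ne
  eq := by rw [← hfg h.left_mem, ← hfg h.right_mem, h.eq]
  lt m hm hmk hml := by rw [← hfg h.left_mem, ← hfg hm]; exact h.lt m hm hmk hml

lemma IsDependency.congr {x : κ → ι → ℝ} {s : Set ι} {p q : ι → ℝ} (h : IsDependency x s p)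
    (hpq : s.EqOn p q) : IsDependency x s q := fun c ↦
  (h c).congr fun _ hi ↦ congrArg (· + _) (hpq hi)

lemma CommonTie.congr {x : κ → ι → ℝ} {s t : Set ι} {p p' q q' : ι → ℝ} {k l : ι}
    (h : CommonTie x s p t q k l) (hp : s.EqOn p p') (hq : t.EqOn q q') :
    CommonTie x s p' t q' k l :=
  let ⟨c, hpc, hqc⟩ := h
  ⟨c, hpc.congr fun _ hi ↦ congrArg (· + _) (hp hi),
    hqc.congr fun _ hi ↦ congrArg (· + _) (hq hi)⟩

lemma CommonTie.sub_eq_sub {x : κ → ι → ℝ} {s t : Set ι} {p q : ι → ℝ} {k l : ι}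
    (h : CommonTie x s p t q k l) : p k - p l = q k - q l := by
  obtain ⟨c, hp, hq⟩ := h
  have hp : p k + x c k = p l + x c l := hp.eq
  have hq : q k + x c k = q l + x c l := hq.eq
  linarith

lemma exists_isDependency_range [Finite κ] {m : ℕ} {x : κ → ι → ℝ} {ri : Fin m → ι}
    (hri : ri.Injective) (h : ∀ s : Fin m → κ, TropSingular fun a b ↦ x (s b) (ri a)) :
    ∃ w, IsDependency x (Set.range ri) w := by
  rcases isEmpty_or_nonempty κ with _ | _
  · exact ⟨0, fun c ↦ isEmptyElim c⟩
  obtain ⟨w, hw⟩ := exists_weights_of_forall_policy (fun a c ↦ x c (ri a))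
    fun s ↦ (h s).exists_weights
  refine ⟨Function.extend ri w 0, fun c ↦ Set.forall_mem_range.2 fun a ↦ ?_⟩
  obtain ⟨b, hb, hle⟩ := hw a c
  exact ⟨ri b, Set.mem_range_self b, hri.ne hb, by simpa [hri.extend_apply] using hle⟩

end Dependencies

section Lifting

open Module

variable {ι κ F : Type*} [Field F]

lemma orderTop_eq_coe_iff {f : HahnSeries ℝ F} {a : ℝ} :
    f.orderTop = a ↔ a ≤ f.orderTop ∧ f.coeff a ≠ 0 :=
  ⟨fun h ↦ ⟨h.ge, HahnSeries.coeff_orderTop_ne h⟩,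
    fun h ↦ (HahnSeries.orderTop_le_of_coeff_ne_zero h.2).antisymm h.1⟩

lemma orderTop_single_sub_single (a b : ℝ) {r s : F} (hr : r ≠ 0) (hs : s ≠ 0) (hrs : r ≠ s) :
    (HahnSeries.single a r - HahnSeries.single b s).orderTop = ↑(min a b) := by
  have horder {a : ℝ} {r : F} (hr : r ≠ 0) : (HahnSeries.single a r).orderTop = a :=
    HahnSeries.orderTop_single hr
  rcases lt_trichotomy a b with hab | rfl | hab
  · rw [HahnSeries.orderTop_sub (by rwa [horder hr, horder hs, WithTop.coe_lt_coe]), horder hr,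
      min_eq_left hab.le]
  · rw [← HahnSeries.single_sub, horder (sub_ne_zero.2 hrs), min_self]
  · rw [← HahnSeries.orderTop_neg, neg_sub,
      HahnSeries.orderTop_sub (by rwa [horder hr, horder hs, WithTop.coe_lt_coe]), horder hs,
      min_eq_right hab.le]

lemma exists_injective_forall_ne_zero (ι F : Type*) [Finite ι] [Zero F] [Infinite F] :
    ∃ c : ι → F, c.Injective ∧ ∀ i, c i ≠ 0 := by
  have e := (Set.finite_singleton (0 : F)).infinite_compl.natEmbedding
  have f := (Finite.equivFin ι).toEmbedding.trans (Fin.valEmbedding.trans e)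
  exact ⟨fun i ↦ f i, Subtype.val_injective.comp f.injective, fun i ↦ (f i).2⟩

/-- The matrix whose columns are the points `x c` has Kapranov rank at most `r` over `F`: its
columns lift to a subspace of dimension at most `r` over the field of generalized power series. -/
def KapranovRankLE (F : Type*) [Field F] (r : ℕ) (x : κ → ι → ℝ) : Prop :=
  ∃ V : Submodule (HahnSeries ℝ F) (ι → HahnSeries ℝ F), finrank (HahnSeries ℝ F) V ≤ r ∧
    ∀ c, ∃ v ∈ V, ∀ i, (v i).orderTop = x c i

lemma KapranovRankLE.mono {r s : ℕ} {x : κ → ι → ℝ} (h : KapranovRankLE F r x) (hrs : r ≤ s) :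
    KapranovRankLE F s x :=
  h.imp fun _ ⟨hV, hx⟩ ↦ ⟨hV.trans hrs, hx⟩

lemma kapranovRankLE_of_isEmpty [IsEmpty κ] (r : ℕ) (x : κ → ι → ℝ) : KapranovRankLE F r x :=
  ⟨⊥, by simp, isEmptyElim⟩

lemma kapranovRankLE_card [Fintype ι] (x : κ → ι → ℝ) : KapranovRankLE F (Fintype.card ι) x :=
  ⟨⊤, by simp, fun c ↦ ⟨fun i ↦ HahnSeries.single (x c i) 1, Submodule.mem_top,
    fun _ ↦ HahnSeries.orderTop_single one_ne_zero⟩⟩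

lemma kapranovRankLE_one {x : κ → ι → ℝ} {a : ι → ℝ} {b : κ → ℝ} (h : ∀ c i, x c i = b c + a i) :
    KapranovRankLE F 1 x := by
  set v : ι → HahnSeries ℝ F := fun i ↦ HahnSeries.single (a i) 1
  refine ⟨Submodule.span _ {v}, (finrank_span_le_card {v}).trans (by simp), fun c ↦
    ⟨HahnSeries.single (b c) (1 : F) • v,
      Submodule.smul_mem _ _ (Submodule.mem_span_singleton_self v), fun i ↦ ?_⟩⟩
  simp [v, h, HahnSeries.orderTop_single]

/- A generic combination over the infinite field `F` of the given vectors works, since no leading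
coefficient cancels. -/
lemma exists_mem_forall_orderTop_eq [Finite ι] [Infinite F]
    {V : Submodule (HahnSeries ℝ F) (ι → HahnSeries ℝ F)} {y : ι → ℝ}
    (h : ∀ i, ∃ v ∈ V, (v i).orderTop = y i ∧ ∀ j, y j ≤ (v j).orderTop) :
    ∃ v ∈ V, ∀ i, (v i).orderTop = y i := by
  let W : Submodule F (ι → HahnSeries ℝ F) :=
    { carrier := {v | v ∈ V ∧ ∀ j, y j ≤ (v j).orderTop}
      zero_mem' := ⟨V.zero_mem, by simp⟩
      add_mem' := fun hv hw ↦ ⟨V.add_mem hv.1 hw.1, fun j ↦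
        (le_min (hv.2 j) (hw.2 j)).trans HahnSeries.min_orderTop_le_orderTop_add⟩
      smul_mem' := by
        rintro r v ⟨hv, hle⟩
        have hC : r • v = (HahnSeries.C r : HahnSeries ℝ F) • v :=
          funext fun j ↦ HahnSeries.C_mul_eq_smul.symm
        exact ⟨hC ▸ V.smul_mem _ hv,
          fun j ↦ (hle j).trans (HahnSeries.orderTop_le_orderTop_smul r (v j))⟩ }
  let leading (i : ι) : Dual F (ι → HahnSeries ℝ F) :=
    { toFun := fun v ↦ (v i).coeff (y i)
      map_add' := by simp
      map_smul' := by simp }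
  obtain ⟨v, hv, hne⟩ := Dual.exists_forall_mem_ne_zero_of_forall_exists W leading fun i ↦
    let ⟨v, hv, hi, hle⟩ := h i
    ⟨v, ⟨hv, hle⟩, (orderTop_eq_coe_iff.1 hi).2⟩
  exact ⟨v, hv.1, fun i ↦ orderTop_eq_coe_iff.2 ⟨hv.2 i, hne i⟩⟩

end Lifting

section Corank

open Module

variable {ι κ F : Type*} [Field F]

lemma MinTwiceOn.exists_isMinOn_ne [Finite ι] {s : Set ι} {f : ι → ℝ} (h : MinTwiceOn s f)
    (hs : s.Nonempty) (u : ι) : ∃ k ∈ s, k ≠ u ∧ IsMinOn f s k := by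
  obtain ⟨k, hk, hmin⟩ := Set.exists_min_image s f s.toFinite hs
  by_cases hku : k = u
  · obtain ⟨j, hj, hjk, hle⟩ := h k hk
    exact ⟨j, hj, hku ▸ hjk, fun i hi ↦ hle.trans (hmin i hi)⟩
  · exact ⟨k, hk, hku, hmin⟩

lemma MinTwiceOn.exists_isMinOn_or_minExactlyAt {s : Set ι} {f : ι → ℝ} (h : MinTwiceOn s f)
    {u k : ι} (hk : k ∈ s) (hku : k ≠ u) (hmin : IsMinOn f s k) :
    (∃ k' ∈ s, k' ≠ u ∧ k' ≠ k ∧ IsMinOn f s k') ∨ MinExactlyAt s f u k := by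
  rw [or_iff_not_imp_left]
  intro hother
  have eq_or_eq {j : ι} (hj : j ∈ s) (hle : f j ≤ f k) : j = u ∨ j = k := by
    by_contra! hne
    exact hother ⟨j, hj, hne.1, hne.2, fun i hi ↦ hle.trans (hmin hi)⟩
  obtain ⟨j, hj, hjk, hle⟩ := h k hk
  obtain rfl : j = u := (eq_or_eq hj hle).resolve_right hjk
  have heq : f j = f k := hle.antisymm (hmin hj)
  refine ⟨hj, hk, hku.symm, heq, fun m hm hmj hmk ↦ heq.trans_lt ?_⟩
  by_contra! hle
  exact (eq_or_eq hm hle).elim hmj hmk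

lemma exists_ne_isMinOn_or_minExactlyAt [Finite ι] {s t : Set ι} {f g : ι → ℝ}
    (hf : MinTwiceOn s f) (hg : MinTwiceOn t g) (hs : s.Nonempty) (ht : t.Nonempty) (u : ι) :
    (∃ k ∈ s, ∃ l ∈ t, k ≠ u ∧ l ≠ u ∧ k ≠ l ∧ IsMinOn f s k ∧ IsMinOn g t l) ∨
      ∃ k, MinExactlyAt s f u k ∧ MinExactlyAt t g u k := by
  obtain ⟨k, hks, hku, hk⟩ := hf.exists_isMinOn_ne hs u
  obtain ⟨l, hlt, hlu, hl⟩ := hg.exists_isMinOn_ne ht u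
  by_cases hkl : k = l
  swap
  · exact .inl ⟨k, hks, l, hlt, hku, hlu, hkl, hk, hl⟩
  subst hkl
  rcases hf.exists_isMinOn_or_minExactlyAt hks hku hk with ⟨k', hk's, hk'u, hk'k, hk'⟩ | hfu
  · exact .inl ⟨k', hk's, k, hlt, hk'u, hku, hk'k, hk', hl⟩
  rcases hg.exists_isMinOn_or_minExactlyAt hlt hku hl with ⟨l', hl't, hl'u, hl'k, hl'⟩ | hgu
  · exact .inl ⟨k, hks, l', hl't, hku, hl'u, hl'k.symm, hk, hl'⟩
  · exact .inr ⟨k, hfu, hgu⟩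

lemma kapranovRankLE_of_subspace [Finite ι] [Infinite F] {r : ℕ} {x : κ → ι → ℝ}
    (V : Submodule (HahnSeries ℝ F) (ι → HahnSeries ℝ F)) (hV : finrank (HahnSeries ℝ F) V ≤ r)
    (h : ∀ c i, ∃ v ∈ V, (v i).orderTop = x c i ∧ ∀ j, x c j ≤ (v j).orderTop) :
    KapranovRankLE F r x :=
  ⟨V, hV, fun c ↦ exists_mem_forall_orderTop_eq (h c)⟩

lemma kapranovRankLE_card_sub_one [Fintype ι] [Nonempty ι] [Infinite F] {x : κ → ι → ℝ}
    {w : ι → ℝ} (hw : IsDependency x Set.univ w) :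
    KapranovRankLE F (Fintype.card ι - 1) x := by
  classical
  set b : ι → HahnSeries ℝ F := fun i ↦ HahnSeries.single (w i) 1 with hb
  set φ : Dual (HahnSeries ℝ F) (ι → HahnSeries ℝ F) :=
    dotProductBilin (HahnSeries ℝ F) (HahnSeries ℝ F) b with hφ
  have hφ0 : φ ≠ 0 := fun h ↦ by
    simpa [hφ, hb] using LinearMap.congr_fun h (Pi.single (Classical.arbitrary ι) 1)
  refine kapranovRankLE_of_subspace (LinearMap.ker φ) ?_ fun c u ↦ ?_
  · rw [← Module.finrank_pi (HahnSeries ℝ F) (ι := ι), ← Dual.finrank_ker_add_one_of_ne_zero hφ0,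
      Nat.add_sub_cancel]
  obtain ⟨k, -, hku, hmin⟩ := (hw c).exists_isMinOn_ne ⟨u, Set.mem_univ u⟩ u
  refine ⟨Pi.single u (HahnSeries.single (x c u) 1) -
    Pi.single k (HahnSeries.single (w u + x c u - w k) 1), ?_, ?_, fun j ↦ ?_⟩
  · simp [hφ, hb, dotProduct_sub]
  · simp [hku, HahnSeries.orderTop_single]
  · by_cases hju : j = u
    · simp [hju, hku, HahnSeries.orderTop_single]
    by_cases hjk : j = k
    · subst hjk
      have : w j + x c j ≤ w u + x c u := hmin (Set.mem_univ u)
      simp only [Pi.sub_apply, Pi.single_eq_same, Pi.single_eq_of_ne hku, zero_sub,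
        HahnSeries.orderTop_neg, HahnSeries.orderTop_single (one_ne_zero (α := F)),
        WithTop.coe_le_coe]
      linarith
    · simp [hju, hjk]

lemma finrank_ker_prod_dotProduct {K₀ : Type*} [Field K₀] [Fintype ι] {b b' : ι → K₀} {i j : ι}
    (hbi : b i ≠ 0) (hbj : b j = 0) (hb'i : b' i = 0) (hb'j : b' j ≠ 0) :
    finrank K₀ (LinearMap.ker ((dotProductBilin K₀ K₀ b).prod (dotProductBilin K₀ K₀ b'))) =
      Fintype.card ι - 2 := by
  classical
  set φ := (dotProductBilin K₀ K₀ b).prod (dotProductBilin K₀ K₀ b') with hφ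
  have hsurj : LinearMap.range φ = ⊤ := LinearMap.range_eq_top.2 fun a ↦
    ⟨Pi.single i (a.1 / b i) + Pi.single j (a.2 / b' j), by
      simp [hφ, dotProduct_add, hbj, hb'i, mul_div_cancel₀, hbi, hb'j]⟩
  have hdim := φ.finrank_range_add_finrank_ker
  rw [hsurj, finrank_top, finrank_prod, finrank_self, finrank_pi] at hdim
  omega

lemma le_orderTop_minor {b b' : ι → HahnSeries ℝ F} {y : ι → ℝ} {α β : ℝ}
    (hb : ∀ u, ↑(α - y u) ≤ (b u).orderTop) (hb' : ∀ u, ↑(β - y u) ≤ (b' u).orderTop) (k l : ι) :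
    ↑(α + β - y k - y l) ≤ (b k * b' l - b l * b' k).orderTop := by
  have le_mul (k l : ι) : ↑(α + β - y k - y l) ≤ (b k * b' l).orderTop := by
    rw [HahnSeries.orderTop_mul]
    refine le_trans (le_of_eq ?_) (add_le_add (hb k) (hb' l))
    rw [← WithTop.coe_add]
    congr 1
    ring
  refine (le_min (le_mul k l) ?_).trans HahnSeries.min_orderTop_le_orderTop_sub
  rw [sub_right_comm]
  exact le_mul l k

/- Three columns of the `2 × ι` matrix with rows `b` and `b'` are linearly dependent, with the
`2 × 2` minors as coefficients. -/
lemma exists_dotProduct_eq_zero_of_orderTop_minor_eq [Fintype ι] {b b' : ι → HahnSeries ℝ F}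
    {y : ι → ℝ} {α β : ℝ} {u k l : ι} (hku : k ≠ u) (hlu : l ≠ u) (hkl : k ≠ l)
    (hb : ∀ u, ↑(α - y u) ≤ (b u).orderTop) (hb' : ∀ u, ↑(β - y u) ≤ (b' u).orderTop)
    (hminor : (b k * b' l - b l * b' k).orderTop = ↑(α + β - y k - y l)) :
    ∃ v : ι → HahnSeries ℝ F, b ⬝ᵥ v = 0 ∧ b' ⬝ᵥ v = 0 ∧ (v u).orderTop = y u ∧
      ∀ j, y j ≤ (v j).orderTop := by
  classical
  set D : ι → ι → HahnSeries ℝ F := fun k l ↦ b k * b' l - b l * b' k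
  set t : HahnSeries ℝ F := HahnSeries.single (y u + y k + y l - α - β) 1
  have orderTop_t : t.orderTop = ↑(y u + y k + y l - α - β) :=
    HahnSeries.orderTop_single one_ne_zero
  have le_mul_minor {m k' l' : ι} (h : y m + y k' + y l' = y u + y k + y l) :
      y m ≤ (t * D k' l').orderTop := by
    rw [HahnSeries.orderTop_mul, orderTop_t]
    refine le_trans (le_of_eq ?_) (add_le_add_right (le_orderTop_minor hb hb' k' l') _)
    rw [← WithTop.coe_add, WithTop.coe_inj]
    linarith
  refine ⟨Pi.single u (t * D k l) - Pi.single k (t * D u l) + Pi.single l (t * D u k),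
    ?_, ?_, ?_, fun j ↦ ?_⟩
  · simp only [dotProduct_add, dotProduct_sub, dotProduct_single, D]
    ring
  · simp only [dotProduct_add, dotProduct_sub, dotProduct_single, D]
    ring
  · simp only [Pi.add_apply, Pi.sub_apply, Pi.single_eq_same, Pi.single_eq_of_ne hku.symm,
      Pi.single_eq_of_ne hlu.symm, sub_zero, add_zero, HahnSeries.orderTop_mul, orderTop_t,
      D, hminor, ← WithTop.coe_add]
    congr 1
    ring
  · by_cases hju : j = u
    · subst hju
      simpa [hku.symm, hlu.symm] using le_mul_minor (m := j) (k' := k) (l' := l) rfl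
    by_cases hjk : j = k
    · subst hjk
      simpa [hju, hkl] using le_mul_minor (m := j) (k' := u) (l' := l) (by ring)
    by_cases hjl : j = l
    · subst hjl
      simpa [hju, hjk] using le_mul_minor (m := j) (k' := u) (l' := k) (by ring)
    · simp [hju, hjk, hjl]

/-- The row of monomials `r u * t ^ p u`, with the entry at `i` replaced by zero. Two such rows
span, or cut out, the subspaces that realise a pair of dependencies. -/
def monomialRow [DecidableEq ι] (i : ι) (p : ι → ℝ) (r : ι → F) : ι → HahnSeries ℝ F :=
  Function.update (fun u ↦ HahnSeries.single (p u) (r u)) i 0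

section MonomialRow

variable [DecidableEq ι]

@[simp]
lemma monomialRow_self (i : ι) (p : ι → ℝ) (r : ι → F) : monomialRow i p r i = 0 :=
  Function.update_self ..

lemma monomialRow_of_ne {i u : ι} (h : u ≠ i) (p : ι → ℝ) (r : ι → F) :
    monomialRow i p r u = HahnSeries.single (p u) (r u) :=
  Function.update_of_ne h ..

lemma le_orderTop_monomialRow {i k : ι} {p y : ι → ℝ} {r : ι → F}
    (hk : IsMinOn (p + y) {i}ᶜ k) (u : ι) :
    ↑(p k + y k - y u) ≤ (monomialRow i p r u).orderTop := by
  by_cases hu : u = i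
  · simp [hu]
  · have : p k + y k ≤ p u + y u := hk hu
    rw [monomialRow_of_ne hu]
    exact (WithTop.coe_le_coe.2 (by linarith)).trans HahnSeries.orderTop_single_le

lemma orderTop_minor_monomialRow {i j k l : ι} {p q y : ι → ℝ} {r : ι → F} (hr : r.Injective)
    (hr0 : ∀ u, r u ≠ 0) (hki : k ≠ i) (hlj : l ≠ j) (hkl : k ≠ l)
    (hk : IsMinOn (p + y) {i}ᶜ k) (hl : IsMinOn (q + y) {j}ᶜ l) :
    (monomialRow i p 1 k * monomialRow j q r l -
      monomialRow i p 1 l * monomialRow j q r k).orderTop = ↑(p k + q l) := by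
  have hmain : monomialRow i p 1 k * monomialRow j q r l =
      HahnSeries.single (p k + q l) (r l) := by
    rw [monomialRow_of_ne hki, monomialRow_of_ne hlj, HahnSeries.single_mul_single,
      Pi.one_apply, one_mul]
  by_cases hli : l = i
  · subst hli
    rw [hmain, monomialRow_self, zero_mul, sub_zero, HahnSeries.orderTop_single (hr0 l)]
  by_cases hkj : k = j
  · subst hkj
    rw [hmain, monomialRow_self, mul_zero, sub_zero, HahnSeries.orderTop_single (hr0 l)]
  have hpk : p k + y k ≤ p l + y l := hk hli
  have hql : q l + y l ≤ q k + y k := hl hkj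
  rw [hmain, monomialRow_of_ne hli, monomialRow_of_ne hkj, HahnSeries.single_mul_single,
    Pi.one_apply, one_mul, orderTop_single_sub_single _ _ (hr0 l) (hr0 k) (hr.ne hkl.symm),
    min_eq_left (by linarith)]

end MonomialRow

/- The lifts are sought in the common kernel of two rows whose entries have the valuations `p`
and `q`. -/
lemma exists_commonTie_compl_of_not_kapranovRankLE [Fintype ι] [Infinite F] {x : κ → ι → ℝ}
    {p q : ι → ℝ} {i j : ι} (hij : i ≠ j) (hp : IsDependency x {i}ᶜ p) (hq : IsDependency x {j}ᶜ q)
    (hx : ¬KapranovRankLE F (Fintype.card ι - 2) x) :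
    ∃ k l, CommonTie x {i}ᶜ p {j}ᶜ q k l := by
  classical
  by_contra! hno
  obtain ⟨r, hr, hr0⟩ := exists_injective_forall_ne_zero ι F
  set φ := (dotProductBilin (HahnSeries ℝ F) (HahnSeries ℝ F) (monomialRow i p 1)).prod
    (dotProductBilin (HahnSeries ℝ F) (HahnSeries ℝ F) (monomialRow j q r))
  refine hx (kapranovRankLE_of_subspace (LinearMap.ker φ) ?_ fun c u ↦ ?_)
  · exact (finrank_ker_prod_dotProduct (i := j) (j := i)
      (by simp [monomialRow_of_ne hij.symm]) (monomialRow_self ..) (monomialRow_self ..)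
      (by simp [monomialRow_of_ne hij, hr0])).le
  rcases exists_ne_isMinOn_or_minExactlyAt (hp c) (hq c) ⟨j, hij.symm⟩ ⟨i, hij⟩ u with
    ⟨k, hki, l, hlj, hku, hlu, hkl, hk, hl⟩ | ⟨k, htie⟩
  · obtain ⟨v, hpv, hqv, hu, hle⟩ := exists_dotProduct_eq_zero_of_orderTop_minor_eq hku hlu hkl
      (le_orderTop_monomialRow hk) (le_orderTop_monomialRow hl) <|
      (orderTop_minor_monomialRow hr hr0 hki hlj hkl hk hl).trans (by congr 1; ring)
    exact ⟨v, LinearMap.mem_ker.2 (Prod.ext hpv hqv), hu, hle⟩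
  · exact (hno u k ⟨c, htie⟩).elim

end Corank

section RankTwo

open Module

variable {ι κ F : Type*} [Field F]

lemma exists_ne_zero_forall_eq_iff_mem (ι F : Type*) [Finite ι] [Zero F] [Infinite F] :
    ∃ c : ι → F, (∀ u, c u ≠ 0) ∧
      ∀ E : Set ι, E.Subsingleton → ∃ γ, γ ≠ 0 ∧ ∀ u, c u = γ ↔ u ∈ E := by
  obtain ⟨c, hc, hc0⟩ := exists_injective_forall_ne_zero (Option ι) F
  refine ⟨fun u ↦ c (some u), fun u ↦ hc0 _, fun E hE ↦ ?_⟩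
  rcases hE.eq_empty_or_singleton with rfl | ⟨u₀, rfl⟩
  · exact ⟨c none, hc0 _, fun u ↦ by simp [hc.eq_iff]⟩
  · exact ⟨c (some u₀), hc0 _, fun u ↦ by simp [hc.eq_iff]⟩

lemma MinTwiceOn.eq_min_or_minExactlyAt {f : ι → ℝ} {i j u : ι} (h : MinTwiceOn {i, j, u} f)
    (hij : i ≠ j) : f u = min (f i) (f j) ∨ MinExactlyAt {i, j, u} f i j := by
  have hi := h i (by simp)
  have hj := h j (by simp)
  have hu := h u (by simp)
  simp only [Set.mem_insert_iff, Set.mem_singleton_iff, exists_eq_or_imp, exists_eq_left]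
    at hi hj hu
  by_cases hlt : f i < f u ∧ f j < f u
  · refine .inr ⟨by simp, by simp, hij, by grind, fun m hm hmi hmj ↦ ?_⟩
    obtain rfl : m = u := by simpa [hmi, hmj] using hm
    exact hlt.1
  · left
    grind

variable {i j : ι}

section MonomialRow

variable [DecidableEq ι] {a b y : ι → ℝ}

/- The coefficient `γ` of the combination is chosen to cancel the entries with `u ∈ E`. -/
lemma exists_mem_span_forall_orderTop (hij : i ≠ j) (ha : a i = 0) (hb : b j = 0) {c : ι → F}
    (hc : ∀ u, c u ≠ 0) {γ : F} (hγ : γ ≠ 0) {E : Set ι} (hE : ∀ u, c u = γ ↔ u ∈ E)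
    (heq : ∀ u ∈ E, y i + a u = y j + b u)
    (hmin : ∀ u ∉ E, u ≠ i → u ≠ j → y u = min (y i + a u) (y j + b u)) :
    ∃ v ∈ Submodule.span (HahnSeries ℝ F) {monomialRow j a (1 : ι → F), monomialRow i b c},
      ∀ u, (u ∉ E → (v u).orderTop = y u) ∧ y u ≤ (v u).orderTop := by
  refine ⟨HahnSeries.single (y j) 1 • monomialRow i b c -
    HahnSeries.single (y i) γ • monomialRow j a 1, Submodule.sub_mem _
      (Submodule.smul_mem _ _ (Submodule.subset_span (by simp)))
      (Submodule.smul_mem _ _ (Submodule.subset_span (by simp))), fun u ↦ ?_⟩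
  have of_eq {o : WithTop ℝ} (h : o = y u) : (u ∉ E → o = y u) ∧ y u ≤ o := ⟨fun _ ↦ h, h.ge⟩
  simp only [Pi.sub_apply, Pi.smul_apply, smul_eq_mul]
  by_cases hui : u = i
  · subst hui
    exact of_eq (by simp [monomialRow_of_ne hij, ha, HahnSeries.orderTop_single hγ])
  by_cases huj : u = j
  · subst huj
    exact of_eq (by simp [monomialRow_of_ne hui, hb, HahnSeries.orderTop_single (hc u)])
  simp only [monomialRow_of_ne hui, monomialRow_of_ne huj, HahnSeries.single_mul_single,
    Pi.one_apply, one_mul, mul_one]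
  by_cases huE : u ∈ E
  · simp [huE, (hE u).2 huE, heq u huE]
  · refine of_eq ?_
    rw [orderTop_single_sub_single _ _ (hc u) hγ fun h ↦ huE ((hE u).1 h), hmin u huE hui huj,
      min_comm]

lemma exists_mem_span_orderTop_eq_of_lt (ha : a i = 0) (c : ι → F) {E : Set ι}
    (hE : E.Subsingleton) {t : ι} (ht : t ∈ E) (htj : t ≠ j) (hlt : y i + a t < y t)
    (hmin : ∀ u ∉ E, u ≠ i → u ≠ j → y u ≤ y i + a u) :
    ∃ v ∈ Submodule.span (HahnSeries ℝ F) {monomialRow j a (1 : ι → F), monomialRow i b c},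
      (v t).orderTop = y t ∧ ∀ u, y u ≤ (v u).orderTop := by
  refine ⟨HahnSeries.single (y t - a t) (1 : F) • monomialRow j a 1,
    Submodule.smul_mem _ _ (Submodule.subset_span (by simp)), ?_, fun u ↦ ?_⟩
  · simp [monomialRow_of_ne htj, HahnSeries.orderTop_single]
  by_cases huj : u = j
  · simp [huj]
  have hle : y u ≤ y t - a t + a u := by
    by_cases hut : u = t
    · simp [hut]
    by_cases hui : u = i
    · subst hui
      linarith
    · linarith [hmin u (fun hu ↦ hut (hE hu ht)) hui huj]
  rw [Pi.smul_apply, smul_eq_mul, monomialRow_of_ne huj, HahnSeries.single_mul_single,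
    Pi.one_apply, mul_one, HahnSeries.orderTop_single one_ne_zero]
  exact WithTop.coe_le_coe.2 hle

end MonomialRow

lemma exists_commonTie_of_not_kapranovRankLE_two [Finite ι] [Infinite F] {x : κ → ι → ℝ}
    (hij : i ≠ j) {w : ι → ι → ℝ} (hw : ∀ u, u ≠ i → u ≠ j → IsDependency x {i, j, u} (w u))
    (hx : ¬KapranovRankLE F 2 x) :
    ∃ u v, u ≠ i ∧ u ≠ j ∧ v ≠ i ∧ v ≠ j ∧ u ≠ v ∧
      CommonTie x {i, j, u} (w u) {i, j, v} (w v) i j := by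
  classical
  by_contra! hno
  obtain ⟨c, hc, hcE⟩ := exists_ne_zero_forall_eq_iff_mem ι F
  set a : ι → ℝ := fun u ↦ w u i - w u u
  set b : ι → ℝ := fun u ↦ w u j - w u u
  refine hx (kapranovRankLE_of_subspace (Submodule.span _ {monomialRow j a 1, monomialRow i b c})
    ?_ fun k ↦ ?_)
  · refine (finrank_span_le_card _).trans ?_
    rw [Set.toFinset_insert, Set.toFinset_singleton]
    exact Finset.card_le_two
  set E : Set ι := {u | u ≠ i ∧ u ≠ j ∧ MinExactlyAt {i, j, u} (w u + x k) i j}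
  have hE : E.Subsingleton := fun u hu v hv ↦ by_contra fun huv ↦
    hno u v hu.1 hu.2.1 hv.1 hv.2.1 huv ⟨k, hu.2.2, hv.2.2⟩
  have heq (u : ι) (hu : u ∈ E) : x k i + a u = x k j + b u := by
    have : w u i + x k i = w u j + x k j := hu.2.2.eq
    linarith
  have hmin (u : ι) (hu : u ∉ E) (hui : u ≠ i) (huj : u ≠ j) :
      x k u = min (x k i + a u) (x k j + b u) := by
    have h := (hw u hui huj k).eq_min_or_minExactlyAt hij
    have : w u u + x k u = min (w u i + x k i) (w u j + x k j) :=
      h.resolve_right fun h ↦ hu ⟨hui, huj, h⟩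
    grind
  obtain ⟨γ, hγ, hγE⟩ := hcE E hE
  obtain ⟨v, hv, hle⟩ := exists_mem_span_forall_orderTop hij (sub_self _) (sub_self _) hc hγ hγE
    heq hmin
  intro u
  by_cases hu : u ∈ E
  · refine exists_mem_span_orderTop_eq_of_lt (y := x k) (sub_self _) c hE hu hu.2.1 ?_
      fun u hu hui huj ↦ (hmin u hu hui huj).trans_le (min_le_left _ _)
    have : w u i + x k i < w u u + x k u := hu.2.2.lt u (by simp) hu.1 hu.2.1
    linarith
  · exact ⟨v, hv, (hle u).1 hu, fun u ↦ (hle u).2⟩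

end RankTwo

section RankThree

variable {κ F : Type*} [Field F] [Infinite F] {x : κ → Fin 5 → ℝ} {p q r y : Fin 5 → ℝ}
  {i j k l m : Fin 5}

lemma eq_or_of_nodup (h : [i, j, k, l, m].Nodup) (a : Fin 5) :
    a = i ∨ a = j ∨ a = k ∨ a = l ∨ a = m := by
  simp only [List.nodup_cons, List.mem_cons, List.not_mem_nil, not_or] at h
  omega

lemma MinTwiceOn.le_or_of_nodup (hp : MinTwiceOn {i}ᶜ (p + y)) (h : [i, j, k, l, m].Nodup) :
    p k + y k ≤ p j + y j ∨ p l + y l ≤ p j + y j ∨ p m + y m ≤ p j + y j := by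
  obtain ⟨a, ha, haj, hle⟩ := hp j (by grind)
  rcases eq_or_of_nodup h a with rfl | rfl | rfl | rfl | rfl
  · exact (ha rfl).elim
  · exact (haj rfl).elim
  · exact .inl hle
  · exact .inr (.inl hle)
  · exact .inr (.inr hle)

lemma MinExactlyAt.eq_and_lt_and_lt (hp : MinExactlyAt {i}ᶜ (p + y) k l)
    (h : [i, j, k, l, m].Nodup) :
    p k + y k = p l + y l ∧ p l + y l < p j + y j ∧ p l + y l < p m + y m :=
  ⟨hp.eq, hp.symm.lt j (by grind) (by grind) (by grind),
    hp.symm.lt m (by grind) (by grind) (by grind)⟩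

lemma commonTie_or_of_not_kapranovRankLE_three (h : [i, j, k, l, m].Nodup)
    (hp : IsDependency x {i}ᶜ p) (hq : IsDependency x {j}ᶜ q) (hx : ¬KapranovRankLE F 3 x) :
    CommonTie x {i}ᶜ p {j}ᶜ q k l ∨ CommonTie x {i}ᶜ p {j}ᶜ q k m ∨
      CommonTie x {i}ᶜ p {j}ᶜ q l m := by
  obtain ⟨a, b, hab⟩ := exists_commonTie_compl_of_not_kapranovRankLE (by grind) hp hq hx
  obtain ⟨c, hpc, hqc⟩ := id hab
  have mem {a : Fin 5} (hi : a ∈ ({i}ᶜ : Set (Fin 5))) (hj : a ∈ ({j}ᶜ : Set (Fin 5))) :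
      a = k ∨ a = l ∨ a = m :=
    ((eq_or_of_nodup h a).resolve_left hi).resolve_left hj
  have hne := hpc.ne
  rcases mem hpc.left_mem hqc.left_mem with rfl | rfl | rfl <;>
    rcases mem hpc.right_mem hqc.right_mem with rfl | rfl | rfl <;>
    simp_all [hab.symm]

lemma lt_or_lt_or_lt_of_minExactlyAt (h : [i, j, k, l, m].Nodup)
    (hp : MinExactlyAt {i}ᶜ (p + y) k l) (hq : MinExactlyAt {j}ᶜ (q + y) k l)
    (hr : MinTwiceOn {k}ᶜ (r + y)) :
    r m - r l < p m - p l ∨ r j - r l < p j - p l ∨ r i - r l < q i - q l := by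
  obtain ⟨-, hpj, hpm⟩ := hp.eq_and_lt_and_lt h
  obtain ⟨-, hqi, -⟩ := hq.eq_and_lt_and_lt (j := i) (m := m) (by grind)
  have hl := hr.le_or_of_nodup (j := l) (k := m) (l := j) (m := i) (by grind)
  grind

lemma eq_of_commonTie_left (h : [i, j, k, l, m].Nodup) (hkl : p k - p l = q k - q l)
    (hm : p m - p l < q m - q l) (hq : IsDependency x {j}ᶜ q)
    (htie : CommonTie x {k}ᶜ r {i}ᶜ p l m ∨ CommonTie x {k}ᶜ r {i}ᶜ p l j ∨
      CommonTie x {k}ᶜ r {i}ᶜ p m j) :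
    (r m - r l = p m - p l ∧ q i - q l < r i - r l) ∨
      (r j - r l = p j - p l ∧ q i - q l < r i - r l) ∨
        r m - r l - (p m - p l) = r j - r l - (p j - p l) := by
  rcases htie with ⟨c, hr, hp⟩ | ⟨c, hr, hp⟩ | ⟨c, hr, hp⟩
  · have hr := hr.eq_and_lt_and_lt (j := i) (m := j) (by grind)
    have hp := hp.eq_and_lt_and_lt (j := k) (m := j) (by grind)
    have hq := (hq c).le_or_of_nodup (j := l) (k := k) (l := m) (m := i) (by grind)
    refine .inl ⟨by linarith, ?_⟩
    rcases hq with h | h | h <;> linarith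
  · have hr := hr.eq_and_lt_and_lt (j := i) (m := m) (by grind)
    have hp := hp.eq_and_lt_and_lt (j := k) (m := m) (by grind)
    have hq := (hq c).le_or_of_nodup (j := l) (k := k) (l := m) (m := i) (by grind)
    refine .inr (.inl ⟨by linarith, ?_⟩)
    rcases hq with h | h | h <;> linarith
  · have hr := hr.eq
    have hp := hp.eq
    simp only [Pi.add_apply] at hr hp
    exact .inr (.inr (by linarith))

lemma eq_of_commonTie_right (h : [i, j, k, l, m].Nodup) (hkl : p k - p l = q k - q l)
    (hm : p m - p l < q m - q l) (hp : IsDependency x {i}ᶜ p)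
    (htie : CommonTie x {k}ᶜ r {j}ᶜ q l m ∨ CommonTie x {k}ᶜ r {j}ᶜ q l i ∨
      CommonTie x {k}ᶜ r {j}ᶜ q m i) :
    (r m - r l = q m - q l ∧ q m - q l - (p m - p l) < r j - r l - (p j - p l)) ∨
      (r i - r l = q i - q l ∧ (p m - p l < r m - r l ∨ p j - p l < r j - r l)) ∨
        (r i - r l - (q i - q l) = r m - r l - (q m - q l) ∧
          r m - r l - (p m - p l) < r j - r l - (p j - p l)) := by
  rcases htie with ⟨c, hr, hq⟩ | ⟨c, hr, hq⟩ | ⟨c, hr, hq⟩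
  · have hr := hr.eq_and_lt_and_lt (j := i) (m := j) (by grind)
    have hq := hq.eq_and_lt_and_lt (j := k) (m := i) (by grind)
    have hp := (hp c).le_or_of_nodup (j := m) (k := k) (l := l) (m := j) (by grind)
    refine .inl ⟨by linarith, ?_⟩
    rcases hp with h | h | h <;> linarith
  · have hr := hr.eq_and_lt_and_lt (j := j) (m := m) (by grind)
    have hq := hq.eq_and_lt_and_lt (j := k) (m := m) (by grind)
    have hp := (hp c).le_or_of_nodup (j := l) (k := k) (l := m) (m := j) (by grind)
    refine .inr (.inl ⟨by linarith, ?_⟩)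
    rcases hp with h | h | h
    · linarith
    · exact .inl (by linarith)
    · exact .inr (by linarith)
  · have hr := hr.eq_and_lt_and_lt (j := j) (m := l) (by grind)
    have hq := hq.eq_and_lt_and_lt (j := k) (m := l) (by grind)
    have hp := (hp c).le_or_of_nodup (j := m) (k := k) (l := l) (m := j) (by grind)
    refine .inr (.inr ⟨by linarith, ?_⟩)
    rcases hp with h | h | h <;> linarith

lemma sub_le_sub_of_commonTie_compl (hx : ¬KapranovRankLE F 3 x) (h : [i, j, k, l, m].Nodup)
    (hp : IsDependency x {i}ᶜ p) (hq : IsDependency x {j}ᶜ q) (hr : IsDependency x {k}ᶜ r)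
    (htie : CommonTie x {i}ᶜ p {j}ᶜ q k l) : q m - q l ≤ p m - p l := by
  by_contra! hm
  have hkl := htie.sub_eq_sub
  obtain ⟨c, hpc, hqc⟩ := htie
  rcases lt_or_lt_or_lt_of_minExactlyAt h hpc hqc (hr c) with _ | _ | _ <;>
  rcases eq_of_commonTie_left h hkl hm hq
    (commonTie_or_of_not_kapranovRankLE_three (by grind) hr hp hx) with ⟨_, _⟩ | ⟨_, _⟩ | _ <;>
  rcases eq_of_commonTie_right h hkl hm hp
    (commonTie_or_of_not_kapranovRankLE_three (by grind) hr hq hx) with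
    ⟨_, _⟩ | ⟨_, _ | _⟩ | ⟨_, _⟩ <;>
  linarith

lemma sub_eq_sub_of_commonTie_compl (hx : ¬KapranovRankLE F 3 x) (h : [i, j, k, l, m].Nodup)
    (hp : IsDependency x {i}ᶜ p) (hq : IsDependency x {j}ᶜ q) (hr : IsDependency x {k}ᶜ r)
    (htie : CommonTie x {i}ᶜ p {j}ᶜ q k l) {a b : Fin 5} (hai : a ≠ i) (haj : a ≠ j)
    (hbi : b ≠ i) (hbj : b ≠ j) : p a - p b = q a - q b := by
  have hm : p m - p l = q m - q l :=
    (sub_le_sub_of_commonTie_compl hx (by grind) hq hp hr htie.swap).antisymm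
      (sub_le_sub_of_commonTie_compl hx h hp hq hr htie)
  have eq_l {a : Fin 5} (hai : a ≠ i) (haj : a ≠ j) : p a - p l = q a - q l := by
    rcases ((eq_or_of_nodup h a).resolve_left hai).resolve_left haj with rfl | rfl | rfl
    · exact htie.sub_eq_sub
    · simp
    · exact hm
  linarith [eq_l hai haj, eq_l hbi hbj]

lemma kapranovRankLE_three_of_isDependency (q : Fin 5 → Fin 5 → ℝ)
    (hq : ∀ i, IsDependency x {i}ᶜ (q i)) : KapranovRankLE F 3 x := by
  by_contra hx
  have exists_tie {i j : Fin 5} (hij : i ≠ j) :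
      ∃ k l m, [i, j, k, l, m].Nodup ∧ CommonTie x {i}ᶜ (q i) {j}ᶜ (q j) k l := by
    obtain ⟨k, l, m, h⟩ : ∃ k l m, [i, j, k, l, m].Nodup := by decide +revert
    rcases commonTie_or_of_not_kapranovRankLE_three h (hq i) (hq j) hx with ht | ht | ht
    · exact ⟨k, l, m, h, ht⟩
    · exact ⟨k, m, l, by grind, ht⟩
    · exact ⟨l, m, k, by grind, ht⟩
  have sub_eq {i j a b : Fin 5} (hij : i ≠ j) (hai : a ≠ i) (haj : a ≠ j) (hbi : b ≠ i)
      (hbj : b ≠ j) : q i a - q i b = q j a - q j b := by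
    obtain ⟨k, l, m, h, htie⟩ := exists_tie hij
    exact sub_eq_sub_of_commonTie_compl hx h (hq i) (hq j) (hq k) htie hai haj hbi hbj
  obtain ⟨k, l, m, h, c, h₀, h₁⟩ := exists_tie zero_ne_one
  rcases lt_or_lt_or_lt_of_minExactlyAt h h₀ h₁ (hq k c) with hlt | hlt | hlt
  · exact hlt.ne (sub_eq (by grind) (by grind) (by grind) (by grind) (by grind))
  · exact hlt.ne (sub_eq (by grind) (by grind) (by grind) (by grind) (by grind))
  · exact hlt.ne (sub_eq (by grind) (by grind) (by grind) (by grind) (by grind))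

end RankThree

section Quartets

variable {ι κ : Type*} {x : κ → ι → ℝ} {s : Set ι} {p q y z : ι → ℝ} {a b c i j k l m : ι}

lemma MinTwiceOn.eq_of_lt (h : MinTwiceOn s (p + y)) (hs : s = {a, b, c})
    (hlt : p a + y a < p b + y b) : p a + y a = p c + y c := by
  subst hs
  obtain ⟨u, hu, hua, hle⟩ := h a (by simp)
  obtain ⟨v, hv, hvc, hle'⟩ := h c (by simp)
  simp only [Set.mem_insert_iff, Set.mem_singleton_iff, Pi.add_apply] at hu hv hle hle'
  grind

lemma MinExactlyAt.eq_and_lt (h : MinExactlyAt s (p + y) a b) (hs : s = {a, b, c})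
    (hne : [a, b, c].Nodup) : p a + y a = p b + y b ∧ p b + y b < p c + y c :=
  ⟨h.eq, h.symm.lt c (by grind) (by grind) (by grind)⟩

lemma minTwiceOn_of_nodup {f : ι → ℝ} (hne : [a, b, c].Nodup) (ha : f b ≤ f a ∨ f c ≤ f a)
    (hb : f a ≤ f b ∨ f c ≤ f b) (hc : f a ≤ f c ∨ f b ≤ f c) : MinTwiceOn {a, b, c} f := by
  simp only [MinTwiceOn, Set.mem_insert_iff, Set.mem_singleton_iff, exists_eq_or_imp,
    exists_eq_left, forall_eq_or_imp, forall_eq]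
  grind

/-- Dependencies `y` among the rows `i`, `j`, `k` and `z` among the rows `i`, `k`, `l`, each
extended to a fourth row so that the weights agree up to constants on `{i, j}` and on `{k, l}`,
without a common tie at `i` and `k`. Then `y` and `z` are dependencies among `i`, `j`, `l` and
among `j`, `k`, `l` too, which makes common ties rare enough for a lift of rank two to exist. -/
structure Quartet (x : κ → ι → ℝ) (i j k l : ι) (y z : ι → ℝ) : Prop where
  nodup : [i, j, k, l].Nodup
  dep_ijk : IsDependency x {i, j, k} y
  dep_ikl : IsDependency x {i, k, l} z
  sub_eq_ij : y i - y j = z i - z j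
  sub_eq_kl : y k - y l = z k - z l
  sub_le_ik : y i - y k ≤ z i - z k
  not_commonTie : ¬CommonTie x {i, j, k} y {i, k, l} z i k

lemma exists_quartet_of_not_commonTie (h : [i, j, k, l].Nodup)
    (hp : IsDependency x {i, j, k} p) (hq : IsDependency x {i, k, l} q)
    (hik : p i - p k ≤ q i - q k) (htie : ¬CommonTie x {i, j, k} p {i, k, l} q i k) :
    ∃ y z, Quartet x i j k l y z := by
  classical
  set y := Function.update p l (p k + q l - q k)
  set z := Function.update q j (q i + p j - p i)
  have hyp : Set.EqOn p y {i, j, k} := by intro a ha; grind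
  have hzq : Set.EqOn q z {i, k, l} := by intro a ha; grind
  exact ⟨y, z, h, hp.congr hyp, hq.congr hzq, by grind, by grind, by grind,
    fun hyz ↦ htie (hyz.congr hyp.symm hzq.symm)⟩

namespace Quartet

lemma mirror (h : Quartet x i j k l y z) : Quartet x k l i j z y where
  nodup := by have := h.nodup; grind
  dep_ijk := by convert h.dep_ikl using 1; grind
  dep_ikl := by convert h.dep_ijk using 1; grind
  sub_eq_ij := h.sub_eq_kl.symm
  sub_eq_kl := h.sub_eq_ij.symm
  sub_le_ik := by linarith [h.sub_le_ik]
  not_commonTie hkl := h.not_commonTie (by convert hkl.swap.symm using 1 <;> grind)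

lemma dep_ijl (h : Quartet x i j k l y z) : IsDependency x {i, j, l} y := by
  have hkl := h.sub_eq_kl
  have hik := h.sub_le_ik
  intro c
  have kl_of_lt (hlt : z k + x c k < z i + x c i) : z k + x c k = z l + x c l :=
    (h.dep_ikl c).eq_of_lt (by grind) hlt
  refine minTwiceOn_of_nodup (by have := h.nodup; grind) ?_ ?_ ?_ <;>
    simp only [Pi.add_apply] <;> by_contra! hlt
  · have hy : y i + x c i = y k + x c k := (h.dep_ijk c).eq_of_lt rfl hlt.1
    rcases (by linarith : z k + x c k ≤ z i + x c i).lt_or_eq with hz | hz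
    · linarith [kl_of_lt hz]
    · refine h.not_commonTie ⟨c, ⟨by simp, by simp, by have := h.nodup; grind, hy, ?_⟩,
        ⟨by simp, by simp, by have := h.nodup; grind, hz.symm, ?_⟩⟩
      · simpa +contextual using fun _ _ ↦ hlt.1
      · have : z i + x c i < z l + x c l := by linarith
        simpa +contextual using fun _ _ ↦ this
  · have hy : y j + x c j = y k + x c k := (h.dep_ijk c).eq_of_lt (by grind) hlt.1
    linarith [kl_of_lt (by linarith)]
  · have hz : z l + x c l = z k + x c k :=
      (h.dep_ikl c).eq_of_lt (b := i) (by grind) (by linarith)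
    have hy : y k + x c k = y j + x c j :=
      (h.dep_ijk c).eq_of_lt (b := i) (by grind) (by linarith)
    linarith

lemma dep_jkl (h : Quartet x i j k l y z) : IsDependency x {j, k, l} z := by
  convert h.mirror.dep_ijl using 1
  grind

lemma not_commonTie_jk (h : Quartet x i j k l y z) :
    ¬CommonTie x {j, k, i} y {j, k, l} z j k := by
  rintro ⟨c, hy, hz⟩
  have hy := hy.eq_and_lt rfl (by have := h.nodup; grind)
  have hz := hz.eq_and_lt rfl (by have := h.nodup; grind)
  have hkl : z k + x c k = z l + x c l :=
    (h.dep_ikl c).eq_of_lt (b := i) (by grind) (by linarith [h.sub_le_ik])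
  exact hz.2.ne hkl

lemma not_commonTie_il (h : Quartet x i j k l y z) (hik : y i - y k = z i - z k) :
    ¬CommonTie x {i, l, j} y {i, l, k} z i l := by
  rintro ⟨c, hy, hz⟩
  have hy := hy.eq_and_lt rfl (by have := h.nodup; grind)
  have hz := hz.eq_and_lt rfl (by have := h.nodup; grind)
  have : y i + x c i = y k + x c k := (h.dep_ijk c).eq_of_lt rfl (by linarith)
  linarith

end Quartet

end Quartets

section FiveRowsRankTwo

variable {κ F : Type*} [Field F] [Infinite F] {x : κ → Fin 5 → ℝ} {p q r y z : Fin 5 → ℝ}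
  {i j k l m : Fin 5}

lemma commonTie_or_of_not_kapranovRankLE_two (h : [i, j, k, l, m].Nodup)
    (hp : IsDependency x {i, j, k} p) (hq : IsDependency x {i, j, l} q)
    (hr : IsDependency x {i, j, m} r) (hx : ¬KapranovRankLE F 2 x) :
    CommonTie x {i, j, k} p {i, j, l} q i j ∨ CommonTie x {i, j, k} p {i, j, m} r i j ∨
      CommonTie x {i, j, l} q {i, j, m} r i j := by
  have mem {u : Fin 5} (hui : u ≠ i) (huj : u ≠ j) : u = k ∨ u = l ∨ u = m :=
    ((eq_or_of_nodup h u).resolve_left hui).resolve_left huj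
  set w : Fin 5 → Fin 5 → ℝ := fun u ↦ if u = k then p else if u = l then q else r
  have hwk : w k = p := if_pos rfl
  have hwl : w l = q := by grind
  have hwm : w m = r := by grind
  have hw (u : Fin 5) (hui : u ≠ i) (huj : u ≠ j) : IsDependency x {i, j, u} (w u) := by
    rcases mem hui huj with rfl | rfl | rfl
    · rwa [hwk]
    · rwa [hwl]
    · rwa [hwm]
  have hij : i ≠ j := by grind
  obtain ⟨u, v, hui, huj, hvi, hvj, huv, htie⟩ :=
    exists_commonTie_of_not_kapranovRankLE_two hij hw hx
  have htie' := htie.swap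
  rcases mem hui huj with rfl | rfl | rfl <;> rcases mem hvi hvj with rfl | rfl | rfl <;>
    simp_all

/- The dependencies `p` and `q` bound `x k - x m` at the columns of the two ties in incompatible
ways. -/
lemma not_commonTie_of_commonTie (hm : [i, j, k, m].Nodup)
    (hp : IsDependency x {i, k, m} p) (hq : IsDependency x {j, k, m} q)
    (htie : CommonTie x {i, k, j} y {i, k, m} p i k) :
    ¬CommonTie x {j, k, i} y {j, k, m} q j k := by
  rintro ⟨d, hyd, hqd⟩
  obtain ⟨c, hyc, hpc⟩ := htie
  have hyc := hyc.eq_and_lt rfl (by grind)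
  have hpc := hpc.eq_and_lt rfl (by grind)
  have hyd := hyd.eq_and_lt rfl (by grind)
  have hqd := hqd.eq_and_lt rfl (by grind)
  have hpd : p k + x d k = p m + x d m := (hp d).eq_of_lt (b := i) (by grind) (by linarith)
  have hqc : q k + x c k = q m + x c m := (hq c).eq_of_lt (b := j) (by grind) (by linarith)
  linarith

namespace Quartet

lemma sub_eq_of_commonTie (h : Quartet x i j k l y z) (hm : [i, j, k, l, m].Nodup)
    (hp : IsDependency x {i, k, m} p) (hq : IsDependency x {j, k, m} q)
    (htie : CommonTie x {i, k, j} y {i, k, m} p i k)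
    (htie' : CommonTie x {j, k, l} z {j, k, m} q j k) : y i - y k = z i - z k := by
  obtain ⟨c, hyc, hpc⟩ := htie
  obtain ⟨d, hzd, hqd⟩ := htie'
  have hyc := hyc.eq_and_lt rfl (by grind)
  have hpc := hpc.eq_and_lt rfl (by grind)
  have hzd := hzd.eq_and_lt rfl (by grind)
  have hqd := hqd.eq_and_lt rfl (by grind)
  have hij := h.sub_eq_ij
  have hik := h.sub_le_ik
  have hki : z k + x d k = z i + x d i := (h.dep_ikl d).eq_of_lt (b := l) (by grind) (by linarith)
  have hqc : q k + x c k = q m + x c m := (hq c).eq_of_lt (b := j) (by grind) (by linarith)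
  refine hik.eq_of_not_lt fun hlt ↦ ?_
  have hpd : p i + x d i = p m + x d m := (hp d).eq_of_lt (b := k) (by grind) (by linarith)
  linarith

lemma not_commonTie_of_sub_eq (h : Quartet x i j k l y z) (hm : [i, j, k, l, m].Nodup)
    (hq : IsDependency x {j, k, m} q) (hr : IsDependency x {i, l, m} r)
    (hik : y i - y k = z i - z k) (hil : r i - r l = y i - y l) {c : κ}
    (hyc : MinExactlyAt {i, k, j} (y + x c) i k) :
    ¬CommonTie x {j, k, l} z {j, k, m} q j k := by
  rintro ⟨d, hzd, hqd⟩
  have hyc := hyc.eq_and_lt rfl (by grind)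
  have hzd := hzd.eq_and_lt rfl (by grind)
  have hqd := hqd.eq_and_lt rfl (by grind)
  have hij := h.sub_eq_ij
  have hkl := h.sub_eq_kl
  have hki : z k + x d k = z i + x d i := (h.dep_ikl d).eq_of_lt (b := l) (by grind) (by linarith)
  have hqc : q k + x c k = q m + x c m := (hq c).eq_of_lt (b := j) (by grind) (by linarith)
  have hil_c : y i + x c i = y l + x c l := (h.dep_ijl c).eq_of_lt (b := j) (by grind) (by linarith)
  have hrd : r i + x d i = r m + x d m := (hr d).eq_of_lt (b := l) (by grind) (by linarith)
  have hrc : r i + x c i ≤ r m + x c m := by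
    by_contra! hlt
    have : r m + x c m = r l + x c l := (hr c).eq_of_lt (b := i) (by grind) hlt
    linarith
  linarith

lemma not_commonTie_leaf (h : Quartet x i j k l y z) (hm : [i, j, k, l, m].Nodup)
    (hp : IsDependency x {i, k, m} p) (hq : IsDependency x {j, k, m} q)
    (hr : IsDependency x {i, l, m} r) (hx : ¬KapranovRankLE F 2 x) :
    ¬CommonTie x {i, k, j} y {i, k, m} p i k := by
  intro htie
  have hyjk : IsDependency x {j, k, i} y := by convert h.dep_ijk using 1; grind
  have hyil : IsDependency x {i, l, j} y := by convert h.dep_ijl using 1; grind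
  have hzil : IsDependency x {i, l, k} z := by convert h.dep_ikl using 1; grind
  rcases commonTie_or_of_not_kapranovRankLE_two (by grind) hyjk h.dep_jkl hq hx with hjk | hjk | hjk
  · exact h.not_commonTie_jk hjk
  · exact not_commonTie_of_commonTie (by grind) hp hq htie hjk
  have hik := h.sub_eq_of_commonTie hm hp hq htie hjk
  have hkl := h.sub_eq_kl
  obtain ⟨c, hyc, -⟩ := htie
  rcases commonTie_or_of_not_kapranovRankLE_two (by grind) hyil hzil hr hx with hil | hil | hil
  · exact h.not_commonTie_il hik hil
  · exact h.not_commonTie_of_sub_eq hm hq hr hik hil.sub_eq_sub.symm hyc hjk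
  · exact h.not_commonTie_of_sub_eq hm hq hr hik (by linarith [hil.sub_eq_sub]) hyc hjk

lemma kapranovRankLE_two (h : Quartet x i j k l y z) (hm : [i, j, k, l, m].Nodup)
    (hdep : ∀ a b c, [a, b, c].Nodup → ∃ w, IsDependency x {a, b, c} w) :
    KapranovRankLE F 2 x := by
  by_contra hx
  obtain ⟨p, hp⟩ := hdep i k m (by grind)
  obtain ⟨q, hq⟩ := hdep j k m (by grind)
  obtain ⟨r, hr⟩ := hdep i l m (by grind)
  have hy : IsDependency x {i, k, j} y := by convert h.dep_ijk using 1; grind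
  rcases commonTie_or_of_not_kapranovRankLE_two (by grind) hy h.dep_ikl hp hx with hik | hik | hik
  · exact h.not_commonTie (by convert hik using 1; grind)
  · exact h.not_commonTie_leaf hm hp hq hr hx hik
  · exact h.mirror.not_commonTie_leaf (m := m) (by grind) (p := p) (q := r) (r := q)
      (by convert hp using 1; grind) (by convert hr using 1; grind)
      (by convert hq using 1; grind) hx (by convert hik.symm using 1 <;> grind)

end Quartet

lemma commonTie_of_not_kapranovRankLE_two (h : [i, j, k, l, m].Nodup)
    (hdep : ∀ a b c, [a, b, c].Nodup → ∃ w, IsDependency x {a, b, c} w)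
    (hp : IsDependency x {i, j, k} p) (hq : IsDependency x {i, k, l} q)
    (hx : ¬KapranovRankLE F 2 x) : CommonTie x {i, j, k} p {i, k, l} q i k := by
  by_contra htie
  rcases le_total (p i - p k) (q i - q k) with hik | hik
  · obtain ⟨y, z, hyz⟩ := exists_quartet_of_not_commonTie (by grind) hp hq hik htie
    exact hx (hyz.kapranovRankLE_two h hdep)
  · obtain ⟨y, z, hyz⟩ := exists_quartet_of_not_commonTie (i := i) (j := l) (k := k) (l := j)
      (p := q) (q := p) (by grind) (by convert hq using 1; grind) (by convert hp using 1; grind)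
      hik fun hqp ↦ htie (by convert hqp.swap using 1 <;> grind)
    exact hx (hyz.kapranovRankLE_two (m := m) (by grind) hdep)

theorem kapranovRankLE_two_of_forall_exists_isDependency
    (hdep : ∀ i j k, [i, j, k].Nodup → ∃ w, IsDependency x {i, j, k} w) :
    KapranovRankLE F 2 x := by
  by_contra hx
  obtain ⟨p, hp⟩ := hdep 0 1 2 (by decide)
  obtain ⟨q, hq⟩ := hdep 0 1 3 (by decide)
  obtain ⟨r, hr⟩ := hdep 0 2 3 (by decide)
  have hp' : IsDependency x {0, 2, 1} p := by convert hp using 1; grind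
  have hr' : IsDependency x {0, 3, 2} r := by convert hr using 1; grind
  have hpr := commonTie_of_not_kapranovRankLE_two (m := 4) (by decide) hdep hp hr hx
  have hqr := commonTie_of_not_kapranovRankLE_two (m := 4) (by decide) hdep hq hr' hx
  obtain ⟨c, hpc, hqc⟩ :=
    commonTie_of_not_kapranovRankLE_two (m := 4) (by decide) hdep hp' hq hx
  have hpc := hpc.eq_and_lt (c := 2) (by grind) (by decide)
  have hqc := hqc.eq_and_lt (c := 3) rfl (by decide)
  have hr_lt : r 0 + x c 0 < r 2 + x c 2 := by linarith [hpr.sub_eq_sub]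
  have hr_eq : r 0 + x c 0 = r 3 + x c 3 := (hr c).eq_of_lt rfl hr_lt
  linarith [hqr.sub_eq_sub]

end FiveRowsRankTwo

section Ranks

open Module

variable {ι κ F : Type*} [Field F] {r : ℕ} {x : κ → ι → ℝ}

lemma IsDependency.isEmpty {i : ι} {w : ι → ℝ} (hw : IsDependency x {i} w) : IsEmpty κ :=
  ⟨fun c ↦
    let ⟨_, hj, hji, _⟩ := hw c i rfl
    hji hj⟩

lemma IsDependency.add_eq_add {i j : ι} {w : ι → ℝ} (hw : IsDependency x {i, j} w) (c : κ) :
    w i + x c i = w j + x c j := by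
  obtain ⟨k, hk, hki, hle⟩ := hw c i (by simp)
  obtain ⟨l, hl, hlj, hle'⟩ := hw c j (by simp)
  obtain rfl : k = j := hk.resolve_left hki
  obtain rfl : l = i := hl.resolve_right hlj
  exact hle'.antisymm hle

lemma kapranovRankLE_one_of_forall_exists_isDependency [Nonempty ι]
    (hdep : ∀ i j : ι, i ≠ j → ∃ w, IsDependency x {i, j} w) : KapranovRankLE F 1 x := by
  obtain ⟨i⟩ := ‹Nonempty ι›
  have sub_const (j : ι) : ∃ a, ∀ c, x c j = x c i + a := by
    rcases eq_or_ne i j with rfl | hij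
    · exact ⟨0, fun c ↦ (add_zero _).symm⟩
    · obtain ⟨w, hw⟩ := hdep i j hij
      exact ⟨w i - w j, fun c ↦ by linarith [hw.add_eq_add c]⟩
  choose a ha using sub_const
  exact kapranovRankLE_one fun c j ↦ ha j c

theorem kapranovRankLE_of_forall_tropSingular [Finite κ] [Infinite F] {x : κ → Fin 5 → ℝ}
    (h : ∀ (ri : Fin (r + 1) → Fin 5) (ci : Fin (r + 1) → κ),
      TropSingular fun a b ↦ x (ci b) (ri a)) : KapranovRankLE F r x := by
  have hdep {s : Set (Fin 5)} (ri : Fin (r + 1) → Fin 5) (hri : ri.Injective)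
      (hs : Set.range ri = s) : ∃ w, IsDependency x s w :=
    hs ▸ exists_isDependency_range hri (h ri)
  match r with
  | 0 =>
    obtain ⟨w, hw⟩ := hdep ![0] (Function.injective_of_subsingleton (α := Fin 1) _)
      (Matrix.range_cons_empty 0 _)
    have := hw.isEmpty
    exact kapranovRankLE_of_isEmpty 0 x
  | 1 =>
    refine kapranovRankLE_one_of_forall_exists_isDependency fun i j hij ↦ ?_
    exact hdep ![i, j] (List.nodup_ofFn.1 (by simpa using hij)) (Matrix.range_cons_cons_empty i j _)
  | 2 =>
    refine kapranovRankLE_two_of_forall_exists_isDependency fun i j k hijk ↦ ?_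
    exact hdep ![i, j, k] (List.nodup_ofFn.1 (by simpa using hijk))
      (by rw [Matrix.range_cons, Matrix.range_cons_cons_empty, Set.singleton_union])
  | 3 =>
    choose w hw using fun i : Fin 5 ↦ hdep i.succAbove Fin.succAbove_right_injective
      (Fin.range_succAbove i)
    exact kapranovRankLE_three_of_isDependency w hw
  | 4 =>
    obtain ⟨w, hw⟩ := hdep id Function.injective_id Set.range_id
    exact kapranovRankLE_card_sub_one hw
  | r + 5 => exact (kapranovRankLE_card x).mono (by simp)

lemma KapranovRankLE.comp [Finite ι] {ι' : Type*} (h : KapranovRankLE F r x) (g : ι' → ι) :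
    KapranovRankLE F r fun c ↦ x c ∘ g := by
  obtain ⟨V, hV, hx⟩ := h
  refine ⟨V.map (LinearMap.funLeft _ _ g), (Submodule.finrank_map_le _ V).trans hV, fun c ↦ ?_⟩
  obtain ⟨v, hv, hval⟩ := hx c
  exact ⟨v ∘ g, ⟨v, hv, rfl⟩, fun i ↦ hval (g i)⟩

lemma KapranovRankLE.exists_matrix [Finite ι] [Fintype κ] (h : KapranovRankLE F r x) :
    ∃ B : Matrix ι κ (HahnSeries ℝ F), (∀ i c, B i c ≠ 0 ∧ (B i c).order = x c i) ∧ B.rank ≤ r := by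
  obtain ⟨V, hV, hx⟩ := h
  choose v hv hval using hx
  refine ⟨Matrix.of fun i c ↦ v c i, fun i c ↦ ?_, ?_⟩
  · have hne : v c i ≠ 0 := by simp [← HahnSeries.orderTop_ne_top, hval]
    exact ⟨hne, WithTop.coe_injective <|
      (HahnSeries.order_eq_orderTop_of_ne_zero hne).trans (hval c i)⟩
  · rw [Matrix.rank_eq_finrank_span_cols]
    exact (Submodule.finrank_mono (Submodule.span_le.2 (Set.range_subset_iff.2 hv))).trans hV

lemma sum_ne_zero_of_orderTop_lt {α : Type*} {s : Finset α} {f : α → HahnSeries ℝ F} {a : α}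
    (has : a ∈ s) (ha : f a ≠ 0) (h : ∀ b ∈ s, b ≠ a → (f a).orderTop < (f b).orderTop) :
    ∑ b ∈ s, f b ≠ 0 := by
  classical
  intro hsum
  rw [← Finset.add_sum_erase s f has] at hsum
  have hlt : HahnSeries.addVal ℝ F (f a) < HahnSeries.addVal ℝ F (∑ b ∈ s.erase a, f b) :=
    (HahnSeries.addVal ℝ F).map_lt_sum (HahnSeries.orderTop_ne_top.2 ha) fun b hb ↦
      h b (Finset.mem_of_mem_erase hb) (Finset.ne_of_mem_erase hb)
  rw [eq_neg_of_add_eq_zero_right hsum, AddValuation.map_neg] at hlt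
  exact hlt.false

lemma orderTop_prod {α : Type*} (s : Finset α) (f : α → HahnSeries ℝ F) :
    (∏ a ∈ s, f a).orderTop = ∑ a ∈ s, (f a).orderTop := by
  classical
  induction s using Finset.induction_on with
  | empty => simp
  | insert a s ha ih =>
    rw [Finset.prod_insert ha, Finset.sum_insert ha, HahnSeries.orderTop_mul, ih]

lemma det_ne_zero_of_not_tropSingular {m : ℕ} {M : Matrix (Fin m) (Fin m) ℝ}
    {B : Matrix (Fin m) (Fin m) (HahnSeries ℝ F)} (hB : ∀ i j, (B i j).orderTop = M i j)
    (h : ¬TropSingular M) : B.det ≠ 0 := by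
  obtain ⟨σ, hσ⟩ := exists_perm_sum_le M
  have orderTop_term (ρ : Equiv.Perm (Fin m)) :
      (Equiv.Perm.sign ρ • ∏ i, B.transpose (ρ i) i).orderTop = ↑(∑ i, M i (ρ i)) := by
    rcases Int.units_eq_one_or (Equiv.Perm.sign ρ) with hρ | hρ <;>
      simp [hρ, Units.neg_smul, orderTop_prod, hB]
  rw [← Matrix.det_transpose, Matrix.det_apply]
  refine sum_ne_zero_of_orderTop_lt (Finset.mem_univ σ) ?_ fun ρ _ hρ ↦ ?_
  · simp only [← HahnSeries.orderTop_ne_top, orderTop_term, ne_eq, WithTop.coe_ne_top,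
      not_false_eq_true]
  · rw [orderTop_term, orderTop_term, WithTop.coe_lt_coe]
    exact (hσ ρ).lt_of_ne fun heq ↦ h ⟨σ, ρ, hρ.symm, heq, hσ⟩

lemma le_rank_of_not_tropSingular {ι κ : Type*} [Fintype κ] {A : Matrix ι κ ℝ}
    {B : Matrix ι κ (HahnSeries ℝ F)} (hB : ∀ i j, B i j ≠ 0 ∧ (B i j).order = A i j)
    {ri : Fin r → ι} {ci : Fin r → κ} (h : ¬TropSingular (A.submatrix ri ci)) : r ≤ B.rank := by
  have hdet : (B.submatrix ri ci).det ≠ 0 := det_ne_zero_of_not_tropSingular (fun i j ↦ by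
    rw [Matrix.submatrix_apply, ← HahnSeries.order_eq_orderTop_of_ne_zero (hB _ _).1, (hB _ _).2,
      Matrix.submatrix_apply]) h
  have hrank : (B.submatrix ri ci).rank = r := by
    rw [Matrix.rank_of_isUnit _ ((Matrix.isUnit_iff_isUnit_det _).2 hdet.isUnit), Fintype.card_fin]
  exact hrank.symm.trans_le (B.rank_submatrix_le ri ci)

section TropicalRank

variable {d n : ℕ} (A : Matrix (Fin d) (Fin n) ℝ)

lemma bddAbove_not_tropSingular :
    BddAbove {r : ℕ | ∃ (ri : Fin r → Fin d) (ci : Fin r → Fin n),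
      Function.Injective ri ∧ Function.Injective ci ∧ ¬TropSingular (A.submatrix ri ci)} :=
  ⟨d, fun r ⟨ri, _, hri, _⟩ ↦ by simpa using Fintype.card_le_of_injective ri hri⟩

lemma tropSingular_submatrix_of_tropicalRank_lt (h : tropicalRank A < r) (ri : Fin r → Fin d)
    (ci : Fin r → Fin n) : TropSingular (A.submatrix ri ci) := by
  refine tropSingular_submatrix_of_forall_injective (fun ri ci hri hci ↦ ?_) ri ci
  by_contra hns
  exact h.not_ge (le_csSup (bddAbove_not_tropSingular A) ⟨ri, ci, hri, hci, hns⟩)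

end TropicalRank

variable [Infinite F]

lemma exists_lift_rank_le_of_le_five {d n : ℕ} (hd : d ≤ 5) {A : Matrix (Fin d) (Fin n) ℝ}
    (h : ∀ (ri : Fin (r + 1) → Fin d) (ci : Fin (r + 1) → Fin n),
      TropSingular (A.submatrix ri ci)) :
    ∃ B : Matrix (Fin d) (Fin n) (HahnSeries ℝ F),
      (∀ i j, B i j ≠ 0 ∧ (B i j).order = A i j) ∧ B.rank ≤ r := by
  rcases isEmpty_or_nonempty (Fin d) with _ | _
  · exact ⟨0, isEmptyElim, by simp⟩
  set f := Function.invFun (Fin.castLE hd)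
  have hf : Function.LeftInverse f (Fin.castLE hd) :=
    Function.leftInverse_invFun (Fin.castLE_injective hd)
  have hA : KapranovRankLE F r fun c i ↦ A (f i) c :=
    kapranovRankLE_of_forall_tropSingular fun ri ci ↦ h (f ∘ ri) ci
  obtain ⟨B, hB, hrank⟩ := (hA.comp (Fin.castLE hd)).exists_matrix
  exact ⟨B, fun i j ↦ ⟨(hB i j).1, by rw [(hB i j).2, Function.comp_apply, hf]⟩, hrank⟩

lemma exists_lift_rank_le {d n : ℕ} (h : d ≤ 5 ∨ n ≤ 5) (A : Matrix (Fin d) (Fin n) ℝ) :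
    ∃ B : Matrix (Fin d) (Fin n) (HahnSeries ℝ F),
      (∀ i j, B i j ≠ 0 ∧ (B i j).order = A i j) ∧ B.rank ≤ tropicalRank A := by
  have hA := tropSingular_submatrix_of_tropicalRank_lt A (Nat.lt_succ_self _)
  rcases h with hd | hn
  · exact exists_lift_rank_le_of_le_five hd hA
  · obtain ⟨B, hB, hrank⟩ := exists_lift_rank_le_of_le_five (F := F) (A := A.transpose) hn
      fun ri ci ↦ (hA ci ri).transpose
    exact ⟨B.transpose, fun i j ↦ hB j i, by rwa [Matrix.rank_transpose]⟩

theorem tropicalRank_eq_kapranovRank_general {d n : ℕ} (h : d ≤ 5 ∨ n ≤ 5)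
    (A : Matrix (Fin d) (Fin n) ℝ) :
    IsLeast {k : ℕ | ∃ B : Matrix (Fin d) (Fin n) (HahnSeries ℝ F),
      (∀ i j, B i j ≠ 0 ∧ (B i j).order = A i j) ∧ B.rank = k} (tropicalRank A) := by
  have tropicalRank_le {B : Matrix (Fin d) (Fin n) (HahnSeries ℝ F)}
      (hB : ∀ i j, B i j ≠ 0 ∧ (B i j).order = A i j) : tropicalRank A ≤ B.rank :=
    csSup_le' fun _ ⟨_, _, _, _, hns⟩ ↦ le_rank_of_not_tropSingular hB hns
  obtain ⟨B, hB, hrank⟩ := exists_lift_rank_le (F := F) h A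
  exact ⟨⟨B, hB, hrank.antisymm (tropicalRank_le hB)⟩,
    fun _ ⟨_, hB', hk⟩ ↦ hk ▸ tropicalRank_le hB'⟩

end Ranks

/-- For a `d × n` real matrix with `d ≤ 5` or `n ≤ 5`, the tropical rank equals the
Kapranov rank. -/
theorem tropicalRank_eq_kapranovRank (d n : ℕ) (h : d ≤ 5 ∨ n ≤ 5)
    (A : Matrix (Fin d) (Fin n) ℝ) :
    tropicalRank A = kapranovRank A :=
  (tropicalRank_eq_kapranovRank_general (F := ℂ) h A).csInf_eq.symm
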